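/- arXiv:1912.03297 — 2 statements merged into one kernel-verified Lean document; each statement's English description precedes it below -/
import Mathlib

section
/- For all functions u, v on the network 𝒢 that are edgewise of class C⁴, the Lagrange identity ∫_𝒢 ( u⁗(x) conj(v(x)) − u(x) conj(v⁗(x)) ) dx = (Γ°u, Γ∘v)_{ℂ^{4E}} − (Γ∘u, Γ°v)_{ℂ^{4E}} holds. -/
/- STATEMENT 1: Lagrange identity for the fourth derivative on a network. -/

noncomputable section

open intervalIntegral

/-- The inner product `(x,y) = ∑ i, x i * conj (y i)` on `ℂ^{4E}`. -/
def ip {ι : Type*} [Fintype ι] (x y : ι → ℂ) : ℂ :=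
  ∑ i, x i * (starRingEnd ℂ) (y i)

/-- The integral over the network: `∫_𝒢 f dx = ∑ e, ∫_0^{ℓ e} f e x dx`. -/
def netInt {E : Type*} [Fintype E] (ℓ : E → ℝ) (f : E → ℝ → ℂ) : ℂ :=
  ∑ e, ∫ x in (0:ℝ)..(ℓ e), f e x

/-- The trace vector `Γ∘u = ((u_e(0))_e, (u_e(ℓ_e))_e, (−u_e′(0))_e, (u_e′(ℓ_e))_e) ∈ ℂ^{4E}`. -/
def Γlow {E : Type*} (ℓ : E → ℝ) (u : E → ℝ → ℂ) : Fin 4 × E → ℂ :=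
  fun p => ![u p.2 0, u p.2 (ℓ p.2), -(deriv (u p.2) 0), deriv (u p.2) (ℓ p.2)] p.1

/-- The trace vector `Γ°u = ((−u_e‴(0))_e, (u_e‴(ℓ_e))_e, (−u_e″(0))_e, (−u_e″(ℓ_e))_e) ∈ ℂ^{4E}`. -/
def Γhigh {E : Type*} (ℓ : E → ℝ) (u : E → ℝ → ℂ) : Fin 4 × E → ℂ :=
  fun p => ![-(iteratedDeriv 3 (u p.2) 0), iteratedDeriv 3 (u p.2) (ℓ p.2),
      -(iteratedDeriv 2 (u p.2) 0), -(iteratedDeriv 2 (u p.2) (ℓ p.2))] p.1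

theorem fourth_order_lagrange_identity
    {E : Type*} [Fintype E] (ℓ : E → ℝ) (hℓ : ∀ e, 0 < ℓ e)
    (u v : E → ℝ → ℂ)
    (hu : ∀ e, ContDiff ℝ 4 (u e)) (hv : ∀ e, ContDiff ℝ 4 (v e)) :
    netInt ℓ (fun e x => iteratedDeriv 4 (u e) x * (starRingEnd ℂ) (v e x)
        - u e x * (starRingEnd ℂ) (iteratedDeriv 4 (v e) x))
      = ip (Γhigh ℓ u) (Γlow ℓ v) - ip (Γlow ℓ u) (Γhigh ℓ v) := by
  have hD : ∀ (w : ℝ → ℂ), ContDiff ℝ 4 w → ∀ n : ℕ, n < 4 → ∀ x,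
      HasDerivAt (iteratedDeriv n w) (iteratedDeriv (n + 1) w x) x := by
    intro w hw n hn x
    rw [iteratedDeriv_succ]
    exact ((hw.differentiable_iteratedDeriv n (by exact_mod_cast hn)) x).hasDerivAt
  have hC : ∀ (w : ℝ → ℂ), ContDiff ℝ 4 w → ∀ n : ℕ, n < 4 → ∀ x,
      HasDerivAt (fun y => (starRingEnd ℂ) (iteratedDeriv n w y))
        ((starRingEnd ℂ) (iteratedDeriv (n + 1) w x)) x := by
    intro w hw n hn x
    exact (hD w hw n hn x).star
  unfold netInt ip Γlow Γhigh
  rw [Fintype.sum_prod_type_right, Fintype.sum_prod_type_right, ← Finset.sum_sub_distrib]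
  refine Finset.sum_congr rfl fun e _ => ?_
  have hmain := integral_eq_sub_of_hasDerivAt (a := 0) (b := ℓ e)
    (f := fun x => iteratedDeriv 3 (u e) x * (starRingEnd ℂ) (iteratedDeriv 0 (v e) x)
      - iteratedDeriv 2 (u e) x * (starRingEnd ℂ) (iteratedDeriv 1 (v e) x)
      + iteratedDeriv 1 (u e) x * (starRingEnd ℂ) (iteratedDeriv 2 (v e) x)
      - iteratedDeriv 0 (u e) x * (starRingEnd ℂ) (iteratedDeriv 3 (v e) x))
    (f' := fun x => iteratedDeriv 4 (u e) x * (starRingEnd ℂ) (v e x)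
        - u e x * (starRingEnd ℂ) (iteratedDeriv 4 (v e) x)) ?_ ?_
  · rw [hmain]
    simp [Fin.sum_univ_four]
    ring
  · intro x _
    have U := fun n hn => hD (u e) (hu e) n hn x
    have V := fun n hn => hC (v e) (hv e) n hn x
    convert ((((U 3 (by norm_num)).mul (V 0 (by norm_num))).sub
      ((U 2 (by norm_num)).mul (V 1 (by norm_num)))).add
      ((U 1 (by norm_num)).mul (V 2 (by norm_num)))).sub
      ((U 0 (by norm_num)).mul (V 3 (by norm_num))) using 1
    · rfl
    · simp only [iteratedDeriv_zero, Nat.reduceAdd]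
      ring
  · apply Continuous.intervalIntegrable
    have h1 := (hu e).continuous_iteratedDeriv 4 le_rfl
    have h2 := (hv e).continuous_iteratedDeriv 4 le_rfl
    have h3 := (hu e).continuous
    have h4 := (hv e).continuous
    exact (h1.mul (Complex.continuous_conj.comp h4)).sub
      (h3.mul (Complex.continuous_conj.comp h2))
end
end

section
/- Let j ≥ 1 be an integer and ℓ > 0. There exist constants c̃₁, c̃₂ > 0 (depending only on j and ℓ) such that for every u ∈ C^{j}([0,ℓ],ℂ) and every integer 0 ≤ h ≤ j − 1: |u^{(h)}(0)| + |u^{(h)}(ℓ)| ≤ c̃₁ ( ∫_0^ℓ |u|² dx )^{1/2} + c̃₂ ( ∫_0^ℓ |u^{(j)}|² dx )^{1/2}. -/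
/- STATEMENT 12: Trace estimate on a bounded interval: all boundary derivative values of
   order `h ≤ j − 1` are bounded by the `L²` norms of `u` and of `u^{(j)}`. -/

noncomputable section

open intervalIntegral

/-- Cauchy-Schwarz on `[0,ℓ]`. -/
lemma cs_aux (ℓ : ℝ) (hℓ : 0 < ℓ) (f : ℝ → ℝ) (g : ℝ → ℂ) (hf : Continuous f)
    (hg : Continuous g) :
    ‖∫ y in (0:ℝ)..ℓ, f y • g y‖ ≤
      (∫ y in (0:ℝ)..ℓ, ‖f y‖^2) ^ ((1:ℝ)/2) * (∫ y in (0:ℝ)..ℓ, ‖g y‖^2) ^ ((1:ℝ)/2) := by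
  refine (intervalIntegral.norm_integral_le_integral_norm hℓ.le).trans ?_
  simp only [norm_smul]
  rw [integral_of_le hℓ.le, integral_of_le hℓ.le, integral_of_le hℓ.le]
  have e : ENNReal.ofReal 2 = 2 := by norm_num
  have h := MeasureTheory.integral_mul_le_Lp_mul_Lq_of_nonneg
    (μ := MeasureTheory.volume.restrict (Set.Ioc 0 ℓ)) (p := 2) (q := 2)
    Real.HolderConjugate.two_two (f := fun y => ‖f y‖) (g := fun y => ‖g y‖)
    (Filter.Eventually.of_forall fun _ => norm_nonneg _)
    (Filter.Eventually.of_forall fun _ => norm_nonneg _)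
    (by
      rw [e, MeasureTheory.memLp_two_iff_integrable_sq hf.norm.aestronglyMeasurable]
      exact (hf.norm.pow 2).integrableOn_Ioc)
    (by
      rw [e, MeasureTheory.memLp_two_iff_integrable_sq hg.norm.aestronglyMeasurable]
      exact (hg.norm.pow 2).integrableOn_Ioc)
  simpa only [Real.rpow_two] using h

/-- The test function `x^m` times a cutoff. -/
lemma test_aux (m : ℕ) (ℓ : ℝ) (hℓ : 0 < ℓ) : ∃ φ : ℝ → ℝ, (∀ n : ℕ, ContDiff ℝ n φ) ∧
    (∀ k, iteratedDeriv k φ ℓ = 0) ∧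
    (∀ k, iteratedDeriv k φ 0 = if k = m then (m.factorial : ℝ) else 0) := by
  let χ : ContDiffBump (0:ℝ) := ⟨ℓ/4, ℓ/2, by linarith, by linarith⟩
  refine ⟨fun x => x ^ m * χ x, fun n => ?_, fun k => ?_, fun k => ?_⟩
  · exact (contDiff_id.pow m).mul χ.contDiff
  · have : (fun x => x ^ m * χ x) =ᶠ[nhds ℓ] fun _ => 0 := by
      filter_upwards [lt_mem_nhds (show ℓ/2 < ℓ by linarith)] with x hx
      rw [χ.zero_of_le_dist, mul_zero]
      rw [Real.dist_eq, sub_zero]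
      exact hx.le.trans (le_abs_self x)
    rw [this.iteratedDeriv_eq k]
    simp [iteratedDeriv_const]
  · have : (fun x => x ^ m * χ x) =ᶠ[nhds 0] fun x => x ^ m := by
      filter_upwards [χ.eventuallyEq_one] with x hx
      rw [hx]; simp
    rw [this.iteratedDeriv_eq k]
    rw [iteratedDeriv_fun_pow_zero (𝕜 := ℝ)]
    push_cast
    rfl

lemma hasDerivAt_aux {E : Type*} [NormedAddCommGroup E] [NormedSpace ℝ E] (n k : ℕ)
    (u : ℝ → E) (hu : ContDiff ℝ n u) (hk : k < n) (x : ℝ) :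
    HasDerivAt (iteratedDeriv k u) (iteratedDeriv (k+1) u x) x := by
  rw [iteratedDeriv_succ]
  exact ((hu.differentiable_iteratedDeriv k (by exact_mod_cast hk)) x).hasDerivAt

lemma left_aux (j h : ℕ) (hh : h < j) (ℓ : ℝ) (hℓ : 0 < ℓ) :
    ∃ a : ℝ, 0 ≤ a ∧ ∃ b : ℝ, 0 ≤ b ∧ ∀ u : ℝ → ℂ, ContDiff ℝ j u →
      ‖iteratedDeriv h u 0‖ ≤ a * (∫ y in (0:ℝ)..ℓ, ‖u y‖^2) ^ ((1:ℝ)/2)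
            + b * (∫ y in (0:ℝ)..ℓ, ‖iteratedDeriv j u y‖^2) ^ ((1:ℝ)/2) := by
  obtain ⟨m, rfl⟩ : ∃ m, j = m + h + 1 := ⟨j - h - 1, by omega⟩
  obtain ⟨φ, hφ, hφℓ, hφ0⟩ := test_aux m ℓ hℓ
  have cφ : ∀ k, Continuous (iteratedDeriv k φ) := fun k =>
    (hφ k).continuous_iteratedDeriv k le_rfl
  refine ⟨(∫ y in (0:ℝ)..ℓ, ‖iteratedDeriv (m+h+1) φ y‖^2) ^ ((1:ℝ)/2), ?_,
    (∫ y in (0:ℝ)..ℓ, ‖φ y‖^2) ^ ((1:ℝ)/2), ?_, fun u hu => ?_⟩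
  · exact Real.rpow_nonneg (integral_nonneg hℓ.le fun _ _ => by positivity) _
  · exact Real.rpow_nonneg (integral_nonneg hℓ.le fun _ _ => by positivity) _
  have cu : ∀ k ≤ m + h + 1, Continuous (iteratedDeriv k u) := fun k hk =>
    hu.continuous_iteratedDeriv k (by exact_mod_cast hk)
  set I : ℕ → ℂ := fun k => ∫ y in (0:ℝ)..ℓ, iteratedDeriv k φ y • iteratedDeriv (m+h+1-k) u y
    with hI
  have step : ∀ k ≤ m + h,
      I k = - (iteratedDeriv k φ 0 • iteratedDeriv (m+h-k) u 0) - I (k+1) := by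
    intro k hk
    have e : m + h + 1 - k = (m + h - k) + 1 := by omega
    have e' : m + h + 1 - (k + 1) = m + h - k := by omega
    simp only [hI]
    rw [e, e', integral_smul_deriv_eq_deriv_smul
      (fun x _ => hasDerivAt_aux (k+1) k φ (hφ _) (by omega) x)
      (fun x _ => hasDerivAt_aux (m+h+1) (m+h-k) u hu (by omega) x)
      ((cφ _).intervalIntegrable _ _) ((cu _ (by omega)).intervalIntegrable _ _), hφℓ]
    simp
  have lo : ∀ k ≤ m, ‖I k‖ = ‖I 0‖ := by
    intro k
    induction k with
    | zero => simp
    | succ k ih =>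
      intro hk
      rw [← ih (by omega), step k (by omega), hφ0, if_neg (by omega)]
      simp
  have hi : ∀ k ≤ h, ‖I (m+1+k)‖ = ‖I (m+1)‖ := by
    intro k
    induction k with
    | zero => simp
    | succ k ih =>
      intro hk
      rw [← ih (by omega), step (m+1+k) (by omega), hφ0, if_neg (by omega)]
      simp [add_assoc]
  have key : (m.factorial : ℝ) • iteratedDeriv h u 0 = - I m - I (m+1) := by
    rw [step m (by omega), hφ0, if_pos rfl, Nat.add_sub_cancel_left]
    ring
  have h1 : ‖iteratedDeriv h u 0‖ ≤ ‖I (m+h+1)‖ + ‖I 0‖ := by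
    have hm : (1:ℝ) ≤ m.factorial := by exact_mod_cast Nat.one_le_iff_ne_zero.2 m.factorial_ne_zero
    calc ‖iteratedDeriv h u 0‖ ≤ m.factorial * ‖iteratedDeriv h u 0‖ :=
          le_mul_of_one_le_left (norm_nonneg _) hm
      _ = ‖(m.factorial : ℝ) • iteratedDeriv h u 0‖ := by
          rw [norm_smul, Real.norm_of_nonneg (by positivity)]
      _ = ‖- I m - I (m+1)‖ := by rw [key]
      _ ≤ ‖I m‖ + ‖I (m+1)‖ := by
          refine (norm_sub_le _ _).trans ?_
          rw [norm_neg]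
      _ = ‖I (m+h+1)‖ + ‖I 0‖ := by
          rw [lo m le_rfl, ← hi h le_rfl, show m+1+h = m+h+1 by omega, add_comm]
  refine h1.trans (add_le_add ?_ ?_)
  · have := cs_aux ℓ hℓ _ u (cφ (m+h+1)) hu.continuous
    simpa [hI] using this
  · have := cs_aux ℓ hℓ φ _ (hφ 0).continuous (cu (m+h+1) le_rfl)
    simpa [hI] using this

theorem trace_estimate_interval
    (j : ℕ) (hj : 1 ≤ j) (ℓ : ℝ) (hℓ : 0 < ℓ) :
    ∃ c₁ > (0:ℝ), ∃ c₂ > (0:ℝ), ∀ u : ℝ → ℂ, ContDiff ℝ j u →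
      ∀ h : ℕ, h ≤ j - 1 →
        ‖iteratedDeriv h u 0‖ + ‖iteratedDeriv h u ℓ‖
          ≤ c₁ * (∫ y in (0:ℝ)..ℓ, ‖u y‖^2) ^ ((1:ℝ)/2)
            + c₂ * (∫ y in (0:ℝ)..ℓ, ‖iteratedDeriv j u y‖^2) ^ ((1:ℝ)/2) := by
  have H : ∀ h : Fin j, _ := fun h => left_aux j h.1 h.2 ℓ hℓ
  choose a ha b hb hab using H
  have sa : 0 ≤ ∑ i, a i := Finset.sum_nonneg fun i _ => ha i
  have sb : 0 ≤ ∑ i, b i := Finset.sum_nonneg fun i _ => hb i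
  refine ⟨2 * ∑ i, a i + 1, by linarith, 2 * ∑ i, b i + 1, by linarith, fun u hu h hh => ?_⟩
  have hlt : h < j := by omega
  have h1 := hab ⟨h, hlt⟩ u hu
  have h2 := hab ⟨h, hlt⟩ (fun z => u (ℓ - z)) (hu.comp (contDiff_const.sub contDiff_id))
  have nrm : ∀ k (t : ℝ), ‖iteratedDeriv k (fun z => u (ℓ - z)) t‖
      = ‖iteratedDeriv k u (ℓ - t)‖ := by
    intro k t
    rw [iteratedDeriv_comp_const_sub]
    simp [norm_smul]
  simp only [nrm] at h2
  rw [integral_comp_sub_left (fun y => ‖u y‖^2) ℓ,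
    integral_comp_sub_left (fun y => ‖iteratedDeriv j u y‖^2) ℓ] at h2
  simp only [sub_zero, sub_self] at h2
  have hA : 0 ≤ (∫ y in (0:ℝ)..ℓ, ‖u y‖^2) ^ ((1:ℝ)/2) :=
    Real.rpow_nonneg (integral_nonneg hℓ.le fun _ _ => by positivity) _
  have hB : 0 ≤ (∫ y in (0:ℝ)..ℓ, ‖iteratedDeriv j u y‖^2) ^ ((1:ℝ)/2) :=
    Real.rpow_nonneg (integral_nonneg hℓ.le fun _ _ => by positivity) _
  have la : a ⟨h, hlt⟩ ≤ ∑ i, a i :=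
    Finset.single_le_sum (fun i _ => ha i) (Finset.mem_univ _)
  have lb : b ⟨h, hlt⟩ ≤ ∑ i, b i :=
    Finset.single_le_sum (fun i _ => hb i) (Finset.mem_univ _)
  have m1 := mul_le_mul_of_nonneg_right la hA
  have m2 := mul_le_mul_of_nonneg_right lb hB
  simp only at h1
  linarith
end
end
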